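/- Fix orders q = (q_1,…,q_d) and, in each direction k, a knot sequence with N_k interior knots (J_k = N_k + q_k). There is a constant c ∈ (0,1] depending only on q and d such that for every coefficient array θ = (θ_j) indexed by multi-indices 1 ≤ j_k ≤ J_k, the tensor-product spline f(x) = Σ_j θ_j ∏_{k=1}^d B_{j_k,q_k}(x_k) satisfies c Σ_j θ_j² ∏_{k=1}^d (t_{k,j_k} − t_{k,j_k−q_k}) ≤ ∫_{[0,1]^d} f(x)² dx ≤ Σ_j θ_j² ∏_{k=1}^d (t_{k,j_k} − t_{k,j_k−q_k}). -/

import Mathlib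

open MeasureTheory

/-- A knot sequence `0 = t 0 < t 1 < ⋯ < t N < t (N+1) = 1` on `[0,1]` with `N` interior
knots. -/
structure KnotSeq where
  N : ℕ
  t : ℕ → ℝ
  t0 : t 0 = 0
  tN : t (N + 1) = 1
  mono : ∀ l, l < N + 1 → t l < t (l + 1)

namespace KnotSeq

/-- The extended knot sequence: the boundary knots `0` and `1` are repeated. -/
noncomputable def T (ks : KnotSeq) (l : ℤ) : ℝ :=
  if l ≤ 0 then 0 else if (ks.N + 1 : ℤ) ≤ l then 1 else ks.t l.toNat

/-- The mesh size `Δ = max_{1 ≤ l ≤ N+1} (t l − t (l−1))`. -/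
noncomputable def mesh (ks : KnotSeq) : ℝ :=
  (Finset.Icc 1 (ks.N + 1)).sup' (Finset.nonempty_Icc.mpr (by omega))
    fun l => ks.t l - ks.t (l - 1)

/-- Quasi-uniformity with constant `C₀`: the mesh size is at most `C₀` times every
spacing. -/
def QuasiUniform (ks : KnotSeq) (C₀ : ℝ) : Prop :=
  ∀ l ∈ Finset.Icc 1 (ks.N + 1), ks.mesh ≤ C₀ * (ks.t l - ks.t (l - 1))

end KnotSeq

/-- The normalized B-spline `B_{j,m}` of order `m` for the extended knot sequence `T`,
defined by the Cox–de Boor recursion.  `B_{j,1}` is the indicator of `[T (j−1), T j)`,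
also including the point `1` when `T j = 1 > T (j−1)`; for orders `≥ 2` the recursion is
`B_{j,m}(x) = ((x − T(j−m))/(T(j−1) − T(j−m))) B_{j−1,m−1}(x)
  + ((T j − x)/(T j − T(j−m+1))) B_{j,m−1}(x)`,
a term with zero denominator being zero (Lean's division-by-zero convention). -/
noncomputable def Bspl (T : ℤ → ℝ) : ℕ → ℤ → ℝ → ℝ
  | 0, _, _ => 0
  | 1, j, x =>
      if T (j - 1) ≤ x ∧ (x < T j ∨ (x = 1 ∧ T j = 1 ∧ T (j - 1) < 1)) then 1 else 0
  | m + 2, j, x =>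
      (x - T (j - (m + 2))) / (T (j - 1) - T (j - (m + 2))) * Bspl T (m + 1) (j - 1) x
        + (T j - x) / (T j - T (j - (m + 1))) * Bspl T (m + 1) j x

open Polynomial in
/-- polynomial pieces -/
noncomputable def bp (T : ℤ → ℝ) (l : ℤ) : ℕ → ℤ → ℝ[X]
  | 0, _ => 0
  | 1, j => if j = l then 1 else 0
  | m + 2, j =>
      C (1 / (T (j - 1) - T (j - (m + 2)))) * (X - C (T (j - (m + 2)))) * bp T l (m + 1) (j - 1)
        + C (1 / (T j - T (j - (m + 1)))) * (C (T j) - X) * bp T l (m + 1) j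

open Polynomial in
lemma bp_succ (T : ℤ → ℝ) (l : ℤ) (m : ℕ) (hm : 1 ≤ m) (j : ℤ) : bp T l (m + 1) j =
      C (1 / (T (j - 1) - T (j - (m + 1)))) * (X - C (T (j - (m + 1)))) * bp T l m (j - 1)
        + C (1 / (T j - T (j - m))) * (C (T j) - X) * bp T l m j := by
  obtain ⟨n, rfl⟩ := Nat.exists_eq_add_of_le' hm
  rw [bp]
  push_cast
  have : (n : ℤ) + 1 + 1 = n + 2 := by ring
  rw [this]

open Polynomial in
lemma bp_degree (T : ℤ → ℝ) (l : ℤ) (m : ℕ) (hm : 1 ≤ m) : ∀ j : ℤ,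
    (bp T l m j).natDegree ≤ m - 1 := by
  induction m, hm using Nat.le_induction with
  | base => intro j; rw [bp]; split_ifs <;> simp
  | succ m hm ih =>
    intro j
    rw [bp_succ T l m hm]
    refine (natDegree_add_le _ _).trans (max_le ?_ ?_)
    · refine natDegree_mul_le.trans ?_
      have h1 : (C (1 / (T (j - 1) - T (j - (m + 1)))) * (X - C (T (j - (m + 1))))).natDegree ≤ 1 := by
        compute_degree
      have := ih (j - 1)
      omega
    · refine natDegree_mul_le.trans ?_
      have h1 : (C (1 / (T j - T (j - m))) * (C (T j) - X)).natDegree ≤ 1 := by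
        compute_degree
      have := ih j
      omega

open Polynomial in
lemma bp_deriv (T : ℤ → ℝ) (hT : Monotone T) (l : ℤ) (m : ℕ) (hm : 1 ≤ m) : ∀ j : ℤ,
    derivative (bp T l (m + 1) j) = C (m : ℝ) *
      (C (1 / (T (j - 1) - T (j - (m + 1)))) * bp T l m (j - 1) -
        C (1 / (T j - T (j - m))) * bp T l m j) := by
  induction m, hm using Nat.le_induction with
  | base =>
    intro j
    rw [bp_succ T l 1 le_rfl]
    have h : ∀ j, derivative (bp T l 1 j) = 0 := by
      intro j; rw [bp]; split_ifs <;> simp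
    simp [h]
    ring
  | succ m hm ih =>
    intro j
    rw [bp_succ T l (m + 1) (by omega)]
    simp only [derivative_add, derivative_mul, derivative_C, derivative_sub, derivative_X, ih]
    rw [bp_succ T l m hm j, bp_succ T l m hm (j - 1)]
    push_cast
    have e1 : j - 1 - ((m : ℤ) + 1) = j - (m + 1 + 1) := by ring
    have e2 : j - 1 - (m : ℤ) = j - (m + 1) := by ring
    rw [e1, e2, show (C ((m : ℝ) + 1) : ℝ[X]) = C (m : ℝ) + 1 by rw [C_add, C_1]]
    have key : C (1 / (T (j - 1) - T (j - (m + 1)))) *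
       (C (1 / (T j - T (j - (m + 1)))) * (C (T j) - C (T (j - (m + 1)))) -
        C (1 / (T (j - 1) - T (j - (m + 1 + 1)))) * (C (T (j - 1)) - C (T (j - (m + 1 + 1))))) = 0 := by
      simp only [← C_sub, ← C_mul]
      rw [C_eq_zero]
      by_cases h : T (j - 1) - T (j - (m + 1)) = 0
      · rw [h]; simp
      · have a1 : T (j - (m + 1)) ≤ T (j - 1) := hT (by omega)
        have a2 : T (j - 1) ≤ T j := hT (by omega)
        have a3 : T (j - (m + 1 + 1)) ≤ T (j - (m + 1)) := hT (by omega)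
        have a4 : 0 < T (j - 1) - T (j - (m + 1)) := lt_of_le_of_ne (by linarith) (Ne.symm h)
        rw [one_div_mul_cancel (by linarith), one_div_mul_cancel (by linarith)]
        simp
    linear_combination (C (m : ℝ)) * bp T l m (j - 1) * key

open Polynomial in
noncomputable def Dop (c u : ℝ) : ℝ[X] →ₗ[ℝ] ℝ[X] :=
  LinearMap.id + (LinearMap.mulLeft ℝ (C c * (C u - X))) ∘ₗ derivative

open Polynomial in
lemma Dop_apply (c u : ℝ) (p : ℝ[X]) : Dop c u p = p + C c * (C u - X) * derivative p := by
  simp [Dop, mul_assoc]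

open Polynomial in
lemma Dop_bp (T : ℤ → ℝ) (hT : Monotone T) (l : ℤ) (m : ℕ) (hm : 1 ≤ m) (u : ℝ) (j : ℤ) :
    Dop (1 / m) u (bp T l (m + 1) j) =
      ((u - T (j - (m + 1))) / (T (j - 1) - T (j - (m + 1)))) • bp T l m (j - 1) +
      ((T j - u) / (T j - T (j - m))) • bp T l m j := by
  rw [Dop_apply, bp_deriv T hT l m hm, bp_succ T l m hm, smul_eq_C_mul, smul_eq_C_mul]
  have : (C (1 / (m : ℝ)) * C (m : ℝ) : ℝ[X]) = 1 := by
    rw [← C_mul, one_div_mul_cancel (by positivity), C_1]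
  rw [div_eq_mul_one_div (u - _), div_eq_mul_one_div (T j - u)]
  simp only [C_mul, C_sub]
  linear_combination (C u - X) * (C (1 / (T (j - 1) - T (j - (m + 1)))) * bp T l m (j - 1) -
        C (1 / (T j - T (j - m))) * bp T l m j) * this

open Polynomial in
lemma exists_lam (Q : ℕ) (K : ℝ) (hK : 0 ≤ K) (m : ℕ) (hm : 1 ≤ m) : ∃ M : ℝ, 0 ≤ M ∧
    ∀ (T : ℤ → ℝ), Monotone T → ∀ l, T (l - 1) = 0 → T l = 1 → ∀ i, l ≤ i → i ≤ l + m - 1 →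
    (∀ k, i - m ≤ k → k ≤ i → |T k| ≤ K) →
    ∃ lam : ℝ[X] →ₗ[ℝ] ℝ, (∀ j, lam (bp T l m j) = if i = j then 1 else 0) ∧
      ∀ k < Q, |lam (X ^ k)| ≤ M := by
  induction m, hm using Nat.le_induction with
  | base =>
    refine ⟨1, zero_le_one, ?_⟩
    intro T hT l h0 h1 i hi hi' _
    have : i = l := by push_cast at hi'; omega
    subst this
    refine ⟨leval 0, ?_, ?_⟩
    · intro j
      rw [bp]
      by_cases h : j = i
      · simp [h]
      · simp [h, Ne.symm h]
    · intro k _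
      simp only [leval_apply, eval_pow, eval_X]
      rcases k with _ | k <;> simp
  | succ m hm ih =>
    obtain ⟨M, hM, ih⟩ := ih
    refine ⟨M + (K * (Q * M) + Q * M), by positivity, ?_⟩
    intro T hT l h0 h1 i hi hi' hb
    have hm0 : (1 : ℝ) ≤ m := by exact_mod_cast hm
    have hc0 : 0 ≤ 1 / (m : ℝ) := by positivity
    have hc1 : 1 / (m : ℝ) ≤ 1 := by rw [div_le_one (by linarith)]; exact hm0
    have bound : ∀ (lam : ℝ[X] →ₗ[ℝ] ℝ) (u : ℝ), |u| ≤ K → (∀ k < Q, |lam (X ^ k)| ≤ M) →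
        ∀ k < Q, |(lam ∘ₗ Dop (1 / m) u) (X ^ k)| ≤ M + (K * (Q * M) + Q * M) := by
      intro lam u hu hlam k hk
      have e : Dop (1 / m) u (X ^ k) = X ^ k + ((1 / m : ℝ) * u * k) • X ^ (k - 1)
          - ((1 / m : ℝ) * k) • X ^ k := by
        rw [Dop_apply, smul_eq_C_mul, smul_eq_C_mul]
        rcases k with _ | k
        · simp
        · simp only [derivative_X_pow, C_mul]
          simp
          ring
      rw [LinearMap.comp_apply, e, map_sub, map_add, map_smul, map_smul, smul_eq_mul, smul_eq_mul]
      have a1 := hlam k hk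
      have a2 := hlam (k - 1) (by omega)
      have hkQ : (k : ℝ) ≤ Q := by exact_mod_cast hk.le
      have a3 : |1 / (m : ℝ) * u * k * lam (X ^ (k - 1))| ≤ K * (Q * M) := by
        rw [abs_mul, abs_mul, abs_mul, abs_of_nonneg hc0, Nat.abs_cast]
        calc 1 / (m : ℝ) * |u| * k * |lam (X ^ (k - 1))| ≤ 1 * K * Q * M := by gcongr
          _ = _ := by ring
      have a4 : |1 / (m : ℝ) * k * lam (X ^ k)| ≤ Q * M := by
        rw [abs_mul, abs_mul, abs_of_nonneg hc0, Nat.abs_cast]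
        calc 1 / (m : ℝ) * k * |lam (X ^ k)| ≤ 1 * Q * M := by gcongr
          _ = _ := by ring
      rw [abs_le] at a1 a3 a4 ⊢
      constructor <;> linarith [a1.1, a1.2, a3.1, a3.2, a4.1, a4.2]
    by_cases hli : l ≤ i - 1
    · obtain ⟨lam, hl1, hl2⟩ := ih T hT l h0 h1 (i - 1) hli (by push_cast at hi'; omega)
        (fun k hk hk' => hb k (by push_cast; omega) (by omega))
      refine ⟨lam ∘ₗ Dop (1 / m) (T (i - 1)), ?_, bound lam _ (hb _ (by push_cast; omega) (by omega)) hl2⟩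
      intro j
      rw [LinearMap.comp_apply, Dop_bp T hT l m hm, map_add, map_smul, map_smul, hl1, hl1,
        smul_eq_mul, smul_eq_mul]
      have hpos : T (i - 1) - T (i - (m + 1)) ≠ 0 := by
        have a1 : T l ≤ T (i - 1) := hT hli
        have a2 : T (i - (m + 1)) ≤ T (l - 1) := hT (by push_cast at hi'; omega)
        intro h; linarith
      by_cases hij : i = j
      · subst hij
        simp [div_self hpos]
      · by_cases hij' : i - 1 = j
        · have : i - 1 ≠ j - 1 := by omega
          subst hij'
          simp [hij, this]
        · have : i - 1 ≠ j - 1 := by omega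
          simp [hij, hij', this]
    · have hil : i = l := by omega
      obtain ⟨lam, hl1, hl2⟩ := ih T hT l h0 h1 i hi (by omega)
        (fun k hk hk' => hb k (by push_cast; omega) (by omega))
      refine ⟨lam ∘ₗ Dop (1 / m) (T (i - m)), ?_, bound lam _ (hb _ (by push_cast; omega) (by omega)) hl2⟩
      intro j
      rw [LinearMap.comp_apply, Dop_bp T hT l m hm, map_add, map_smul, map_smul, hl1, hl1,
        smul_eq_mul, smul_eq_mul]
      have hpos : T i - T (i - m) ≠ 0 := by
        have a2 : T (i - m) ≤ T (l - 1) := hT (by omega)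
        rw [hil] at a2 ⊢
        intro h; linarith
      by_cases hij : i = j
      · subst hij
        simp [div_self hpos, show ¬ i = i - 1 by omega]
      · by_cases hij' : i = j - 1
        · have : j - (m + 1) = i - m := by omega
          rw [this]
          simp [hij]
        · simp [hij, hij']

open Polynomial in
lemma exists_coeff_dual (Q : ℕ) : ∃ e : ℕ → ℝ[X], ∀ k < Q, ∀ p : ℝ[X], p.degree < Q →
    ∫ x in (0:ℝ)..1, (e k).eval x * p.eval x = p.coeff k := by
  let V := degreeLT ℝ Q
  have hii : ∀ p q : ℝ[X], IntervalIntegrable (fun x => p.eval x * q.eval x) volume 0 1 :=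
    fun p q => (by fun_prop : Continuous (fun x => p.eval x * q.eval x)).intervalIntegrable _ _
  let Φ : V →ₗ[ℝ] (V →ₗ[ℝ] ℝ) := LinearMap.mk₂ ℝ
    (fun p q => ∫ x in (0:ℝ)..1, (p : ℝ[X]).eval x * (q : ℝ[X]).eval x)
    (by
      intro p p' q
      simp only [Submodule.coe_add, eval_add, add_mul]
      exact intervalIntegral.integral_add (hii _ _) (hii _ _))
    (by
      intro c p q
      simp only [Submodule.coe_smul, eval_smul, smul_eq_mul, mul_assoc]
      exact intervalIntegral.integral_const_mul _ _)
    (by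
      intro p q q'
      simp only [Submodule.coe_add, eval_add, mul_add]
      exact intervalIntegral.integral_add (hii _ _) (hii _ _))
    (by
      intro c p q
      simp only [Submodule.coe_smul, eval_smul, smul_eq_mul]
      rw [← intervalIntegral.integral_const_mul]
      congr 1; ext x; ring)
  have : FiniteDimensional ℝ V := Module.Finite.of_injective
    (degreeLTEquiv ℝ Q).toLinearMap (degreeLTEquiv ℝ Q).injective
  have hinj : Function.Injective Φ := by
    rw [← LinearMap.ker_eq_bot, LinearMap.ker_eq_bot']
    intro p hp
    have h0 : ∫ x in (0:ℝ)..1, (p : ℝ[X]).eval x * (p : ℝ[X]).eval x = 0 := by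
      have := LinearMap.congr_fun hp p
      simpa [Φ] using this
    by_contra hne
    have hne' : (p : ℝ[X]) ≠ 0 := fun h => hne (Subtype.ext h)
    have hz : ∀ x ∈ Set.Icc (0:ℝ) 1, (p : ℝ[X]).eval x = 0 := by
      by_contra hcon
      push Not at hcon
      obtain ⟨c, hc, hc'⟩ := hcon
      have := intervalIntegral.integral_pos (f := fun x => (p : ℝ[X]).eval x * (p : ℝ[X]).eval x)
        (a := 0) (b := 1) zero_lt_one (by fun_prop) (fun x _ => mul_self_nonneg _)
        ⟨c, hc, mul_self_pos.2 hc'⟩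
      linarith
    apply hne'
    apply Polynomial.eq_zero_of_infinite_isRoot
    exact (Set.Icc_infinite (zero_lt_one (α := ℝ))).mono hz
  have hsurj : Function.Surjective Φ :=
    (LinearMap.injective_iff_surjective_of_finrank_eq_finrank
      (Subspace.dual_finrank_eq (K := ℝ) (V := V)).symm).1 hinj
  choose e he using fun k => hsurj ((lcoeff ℝ k) ∘ₗ V.subtype)
  refine ⟨fun k => (e k : ℝ[X]), ?_⟩
  intro k _ p hp
  have := LinearMap.congr_fun (he k) ⟨p, mem_degreeLT.2 hp⟩
  simpa [Φ] using this

open Polynomial in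
/-- Dual polynomial on the unit interval. -/
lemma exists_dual_poly (q : ℕ) (hq : 1 ≤ q) : ∃ M : ℝ, 0 ≤ M ∧
    ∀ (T : ℤ → ℝ), Monotone T → ∀ l, T (l - 1) = 0 → T l = 1 → ∀ i, l ≤ i → i ≤ l + q - 1 →
    (∀ k, i - q ≤ k → k ≤ i → |T k| ≤ q) →
    ∃ g : ℝ[X], (∀ y ∈ Set.Icc (0:ℝ) 1, |g.eval y| ≤ M) ∧
      ∀ j, ∫ y in (0:ℝ)..1, g.eval y * (bp T l q j).eval y = if i = j then 1 else 0 := by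
  obtain ⟨M, hM, H⟩ := exists_lam q q (by positivity) q hq
  obtain ⟨e, he⟩ := exists_coeff_dual q
  have hE : ∀ k, ∃ E : ℝ, ∀ y ∈ Set.Icc (0:ℝ) 1, |(e k).eval y| ≤ E := by
    intro k
    obtain ⟨E, hE⟩ := (isCompact_Icc (a := (0:ℝ)) (b := 1)).exists_bound_of_continuousOn
      (f := fun y => (e k).eval y) (by fun_prop)
    exact ⟨E, hE⟩
  choose E hE using hE
  have hE0 : ∀ k, 0 ≤ E k := fun k => (abs_nonneg _).trans (hE k 0 (by simp))
  refine ⟨∑ k ∈ Finset.range q, M * E k, Finset.sum_nonneg fun k _ => mul_nonneg hM (hE0 k), ?_⟩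
  intro T hT l h0 h1 i hi hi' hb
  obtain ⟨lam, hl1, hl2⟩ := H T hT l h0 h1 i hi hi' hb
  refine ⟨∑ k ∈ Finset.range q, C (lam (X ^ k)) * e k, ?_, ?_⟩
  · intro y hy
    rw [eval_finsetSum]
    refine (Finset.abs_sum_le_sum_abs _ _).trans (Finset.sum_le_sum ?_)
    intro k hk
    rw [eval_mul, eval_C, abs_mul]
    exact mul_le_mul (hl2 k (Finset.mem_range.1 hk)) (hE k y hy) (abs_nonneg _) hM
  · intro j
    rw [← hl1 j]
    have hdeg : (bp T l q j).natDegree < q := by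
      have := bp_degree T l q hq j
      omega
    have hdeg' : (bp T l q j).degree < q := degree_le_natDegree.trans_lt (by exact_mod_cast hdeg)
    conv_rhs => rw [as_sum_range_C_mul_X_pow' _ hdeg]
    rw [map_sum]
    simp only [eval_finsetSum, eval_mul, eval_C, Finset.sum_mul]
    rw [intervalIntegral.integral_finsetSum]
    · refine Finset.sum_congr rfl fun k hk => ?_
      simp only [mul_assoc]
      rw [intervalIntegral.integral_const_mul, he k (Finset.mem_range.1 hk) _ hdeg',
        ← smul_eq_C_mul, map_smul, smul_eq_mul, mul_comm]
    · intro k _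
      exact (by fun_prop : Continuous _).intervalIntegrable _ _

lemma KnotSeq.T_monotone (ks : KnotSeq) : Monotone ks.T := by
  refine monotone_int_of_le_succ fun n => ?_
  have hm : ∀ l, l ≤ ks.N + 1 → 0 ≤ ks.t l := by
    intro l hl
    induction l with
    | zero => rw [ks.t0]
    | succ l ih => exact (ih (by omega)).trans (ks.mono l (by omega)).le
  unfold KnotSeq.T
  by_cases h1 : n ≤ 0
  · rw [if_pos h1]
    split_ifs
    · exact le_rfl
    · exact zero_le_one
    · exact hm _ (by omega)
  · rw [if_neg h1, if_neg (show ¬ n + 1 ≤ 0 by omega)]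
    by_cases h2 : (ks.N + 1 : ℤ) ≤ n
    · rw [if_pos h2, if_pos (by omega)]
    · rw [if_neg h2]
      have h4 := (ks.mono n.toNat (by omega)).le
      by_cases h3 : (ks.N + 1 : ℤ) ≤ n + 1
      · rw [if_pos h3]
        have : n.toNat + 1 = ks.N + 1 := by omega
        rwa [this, ks.tN] at h4
      · rw [if_neg h3]
        have : (n + 1).toNat = n.toNat + 1 := by omega
        rwa [this]

lemma KnotSeq.T_zero (ks : KnotSeq) : ks.T 0 = 0 := by simp [KnotSeq.T]

lemma KnotSeq.T_last (ks : KnotSeq) : ks.T (ks.N + 1) = 1 := by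
  unfold KnotSeq.T
  rw [if_neg (by omega), if_pos le_rfl]

lemma KnotSeq.T_nonneg (ks : KnotSeq) (l : ℤ) : 0 ≤ ks.T l := by
  rcases le_total l 0 with h | h
  · simp [KnotSeq.T, h]
  · rw [← ks.T_zero]; exact ks.T_monotone h

lemma KnotSeq.T_le_one (ks : KnotSeq) (l : ℤ) : ks.T l ≤ 1 := by
  rcases le_total l (ks.N + 1) with h | h
  · rw [← ks.T_last]; exact ks.T_monotone h
  · unfold KnotSeq.T
    rw [if_neg (by omega), if_pos h]

lemma KnotSeq.exists_interval (ks : KnotSeq) (x : ℝ) (hx : x ∈ Set.Ico (0:ℝ) 1) :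
    ∃ l, ks.T (l - 1) ≤ x ∧ x < ks.T l := by
  have hex : ∃ n : ℕ, x < ks.T n := ⟨ks.N + 1, by push_cast; rw [ks.T_last]; exact hx.2⟩
  classical
  have h1 := Nat.find_spec hex
  have h2 : Nat.find hex ≠ 0 := by
    intro h
    rw [h] at h1
    simp only [Nat.cast_zero, ks.T_zero] at h1
    linarith [hx.1]
  have h3 := Nat.find_min hex (m := Nat.find hex - 1) (by omega)
  refine ⟨Nat.find hex, ?_, h1⟩
  push Not at h3
  rwa [Nat.cast_sub (by omega), Nat.cast_one] at h3

lemma Bspl_succ (T : ℤ → ℝ) (m : ℕ) (hm : 1 ≤ m) (j : ℤ) (x : ℝ) : Bspl T (m + 1) j x =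
      (x - T (j - (m + 1))) / (T (j - 1) - T (j - (m + 1))) * Bspl T m (j - 1) x
        + (T j - x) / (T j - T (j - m)) * Bspl T m j x := by
  obtain ⟨n, rfl⟩ := Nat.exists_eq_add_of_le' hm
  rw [Bspl]
  push_cast
  have : (n : ℤ) + 1 + 1 = n + 2 := by ring
  rw [this]

lemma Bspl_measurable (T : ℤ → ℝ) (m : ℕ) (hm : 1 ≤ m) : ∀ j, Measurable (Bspl T m j) := by
  induction m, hm using Nat.le_induction with
  | base =>
    intro j
    have : Bspl T 1 j = fun x =>
        if T (j - 1) ≤ x ∧ (x < T j ∨ (x = 1 ∧ T j = 1 ∧ T (j - 1) < 1)) then 1 else 0 := by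
      ext x; rw [Bspl]
    rw [this]
    refine Measurable.ite ?_ measurable_const measurable_const
    refine (measurableSet_Ici (a := T (j - 1))).inter
      ((measurableSet_Iio (a := T j)).union ?_)
    by_cases h : T j = 1 ∧ T (j - 1) < 1
    · have e : {x : ℝ | x = 1 ∧ T j = 1 ∧ T (j - 1) < 1} = {1} := by
        ext x; simp [h]
      change MeasurableSet {x : ℝ | x = 1 ∧ T j = 1 ∧ T (j - 1) < 1}
      rw [e]; exact measurableSet_singleton _
    · have e : {x : ℝ | x = 1 ∧ T j = 1 ∧ T (j - 1) < 1} = ∅ := by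
        ext x; simp only [h, and_false]; simp
      change MeasurableSet {x : ℝ | x = 1 ∧ T j = 1 ∧ T (j - 1) < 1}
      rw [e]; exact MeasurableSet.empty
  | succ m hm ih =>
    intro j
    have : Bspl T (m + 1) j = fun x => _ := funext fun x => Bspl_succ T m hm j x
    rw [this]
    have h1 := ih j
    have h2 := ih (j - 1)
    fun_prop

lemma Bspl_nonneg_supp (T : ℤ → ℝ) (hT : Monotone T) (m : ℕ) (hm : 1 ≤ m) : ∀ j x,
    0 ≤ Bspl T m j x ∧ (Bspl T m j x ≠ 0 → T (j - m) ≤ x ∧ x ≤ T j) := by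
  induction m, hm using Nat.le_induction with
  | base =>
    intro j x
    rw [Bspl]
    split_ifs with h
    · refine ⟨zero_le_one, fun _ => ⟨by simpa using h.1, ?_⟩⟩
      rcases h.2 with h | h
      · exact h.le
      · rw [h.1, h.2.1]
    · simp
  | succ m hm ih =>
    intro j x
    rw [Bspl_succ T m hm]
    obtain ⟨a0, a1⟩ := ih (j - 1) x
    obtain ⟨b0, b1⟩ := ih j x
    rw [show j - 1 - (m : ℤ) = j - (m + 1) by ring] at a1
    have m1 : T (j - (m + 1)) ≤ T (j - 1) := hT (by omega)
    have m2 : T (j - m) ≤ T j := hT (by omega)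
    have m3 : T (j - 1) ≤ T j := hT (by omega)
    have m4 : T (j - (m + 1)) ≤ T (j - m) := hT (by omega)
    constructor
    · apply add_nonneg
      · by_cases h : Bspl T m (j - 1) x = 0
        · simp [h]
        · exact mul_nonneg (div_nonneg (by linarith [(a1 h).1]) (by linarith)) a0
      · by_cases h : Bspl T m j x = 0
        · simp [h]
        · exact mul_nonneg (div_nonneg (by linarith [(b1 h).2]) (by linarith)) b0
    · intro hne
      push_cast
      by_cases h : Bspl T m (j - 1) x = 0
      · have h' : Bspl T m j x ≠ 0 := by
          intro h'; rw [h, h'] at hne; simp at hne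
        exact ⟨by linarith [(b1 h').1], (b1 h').2⟩
      · exact ⟨(a1 h).1, by linarith [(a1 h).2]⟩

lemma interval_unique (T : ℤ → ℝ) (hT : Monotone T) (x : ℝ) (l j : ℤ)
    (h1 : T (l - 1) ≤ x) (h2 : x < T l) (h3 : T (j - 1) ≤ x) (h4 : x < T j) : j = l := by
  have a := hT.reflect_lt (h1.trans_lt h4)
  have b := hT.reflect_lt (h3.trans_lt h2)
  omega

lemma Bspl_one (T : ℤ → ℝ) (hT : Monotone T) (x : ℝ) (l : ℤ) (hx : x < 1)
    (h1 : T (l - 1) ≤ x) (h2 : x < T l) (j : ℤ) :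
    Bspl T 1 j x = if j = l then 1 else 0 := by
  rw [Bspl]
  by_cases h : j = l
  · subst h
    simp [h1, h2]
  · rw [if_neg h, if_neg]
    rintro ⟨h3, h4⟩
    rcases h4 with h4 | h4
    · exact h (interval_unique T hT x l j h1 h2 h3 h4)
    · linarith [h4.1]

lemma Bspl_sum_le (T : ℤ → ℝ) (hT : Monotone T) (x : ℝ) (l : ℤ) (hx : x < 1)
    (h1 : T (l - 1) ≤ x) (h2 : x < T l) (m : ℕ) (hm : 1 ≤ m) : ∀ (n : ℕ) (a : ℤ),
    ∑ k ∈ Finset.range n, Bspl T m (a + k) x ≤ 1 := by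
  induction m, hm using Nat.le_induction with
  | base =>
    intro n a
    simp only [Bspl_one T hT x l hx h1 h2]
    rw [Finset.sum_boole]
    have : (Finset.filter (fun k : ℕ => a + (k : ℤ) = l) (Finset.range n)).card ≤ 1 := by
      rw [Finset.card_le_one]
      intro b hb c hc
      simp only [Finset.mem_filter] at hb hc
      omega
    exact_mod_cast this
  | succ m hm ih =>
    intro n a
    refine le_trans ?_ (ih (n + 1) (a - 1))
    simp only [Bspl_succ T m hm, Finset.sum_add_distrib]
    set p : ℤ → ℝ := fun j => (x - T (j - m)) / (T j - T (j - m)) * Bspl T m j x with hp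
    set r : ℤ → ℝ := fun j => (T j - x) / (T j - T (j - m)) * Bspl T m j x with hr
    have hp0 : ∀ j, 0 ≤ p j := by
      intro j
      by_cases h : Bspl T m j x = 0
      · simp [hp, h]
      · have := (Bspl_nonneg_supp T hT m hm j x).2 h
        exact mul_nonneg (div_nonneg (by linarith) (by linarith)) (Bspl_nonneg_supp T hT m hm j x).1
    have hr0 : ∀ j, 0 ≤ r j := by
      intro j
      by_cases h : Bspl T m j x = 0
      · simp [hr, h]
      · have := (Bspl_nonneg_supp T hT m hm j x).2 h
        exact mul_nonneg (div_nonneg (by linarith) (by linarith)) (Bspl_nonneg_supp T hT m hm j x).1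
    have hpr : ∀ j, p j + r j ≤ Bspl T m j x := by
      intro j
      simp only [hp, hr]
      rw [← add_mul, ← add_div]
      have e : x - T (j - m) + (T j - x) = T j - T (j - m) := by ring
      rw [e]
      have := div_self_le_one (T j - T (j - m))
      have := mul_le_mul_of_nonneg_right this (Bspl_nonneg_supp T hT m hm j x).1
      simpa using this
    calc _ = ∑ k ∈ Finset.range n, p (a - 1 + k) + ∑ k ∈ Finset.range n, r (a + k) := by
          congr 1
          refine Finset.sum_congr rfl fun k _ => ?_
          simp only [hp]
          rw [show a + (k : ℤ) - (m + 1) = a - 1 + k - m by ring,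
            show a + (k : ℤ) - 1 = a - 1 + k by ring]
      _ ≤ ∑ k ∈ Finset.range (n + 1), p (a - 1 + k) + ∑ k ∈ Finset.range (n + 1), r (a - 1 + k) := by
          refine add_le_add ?_ ?_
          · rw [Finset.sum_range_succ]
            linarith [hp0 (a - 1 + n)]
          · rw [Finset.sum_range_succ' (fun k : ℕ => r (a - 1 + k))]
            have : ∀ k : ℕ, a - 1 + ((k + 1 : ℕ) : ℤ) = a + k := by intro k; push_cast; ring
            simp only [this]
            linarith [hr0 (a - 1 + (0 : ℕ))]
      _ = ∑ k ∈ Finset.range (n + 1), (p (a - 1 + k) + r (a - 1 + k)) := by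
          rw [Finset.sum_add_distrib]
      _ ≤ _ := Finset.sum_le_sum fun k _ => hpr _

lemma Bspl_eq_bp (T : ℤ → ℝ) (hT : Monotone T) (x : ℝ) (l : ℤ) (hx : x < 1)
    (h1 : T (l - 1) ≤ x) (h2 : x < T l) (a h : ℝ) (hh : 0 < h) (m : ℕ) (hm : 1 ≤ m) : ∀ j,
    Bspl T m j x = (bp (fun k => (T k - a) / h) l m j).eval ((x - a) / h) := by
  induction m, hm using Nat.le_induction with
  | base =>
    intro j
    rw [Bspl_one T hT x l hx h1 h2, bp]
    split_ifs <;> simp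
  | succ m hm ih =>
    intro j
    rw [Bspl_succ T m hm, bp_succ _ l m hm, ih, ih]
    simp only [Polynomial.eval_add, Polynomial.eval_mul, Polynomial.eval_sub, Polynomial.eval_C,
      Polynomial.eval_X]
    simp only [← sub_div, sub_sub_sub_cancel_right]
    congr 2
    · rw [one_div_mul_eq_div, div_div_div_cancel_right₀ hh.ne']
    · rw [one_div_mul_eq_div, div_div_div_cancel_right₀ hh.ne']

lemma exists_long (T : ℤ → ℝ) (i : ℤ) (q : ℕ) (hq : 1 ≤ q) :
    ∃ l, l ≤ i ∧ i ≤ l + q - 1 ∧ T i - T (i - q) ≤ q * (T l - T (l - 1)) := by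
  have hsum : ∑ k ∈ Finset.range q, (T (i - k) - T (i - k - 1)) = T i - T (i - q) := by
    have := Finset.sum_range_sub' (fun k : ℕ => T (i - k)) q
    simp only [Nat.cast_zero, sub_zero] at this
    rw [← this]
    refine Finset.sum_congr rfl fun k _ => ?_
    push_cast
    rw [sub_sub i]
  by_contra hcon
  push Not at hcon
  have : ∑ k ∈ Finset.range q, (q : ℝ) * (T (i - k) - T (i - k - 1)) <
      ∑ k ∈ Finset.range q, (T i - T (i - q)) := by
    refine Finset.sum_lt_sum_of_nonempty ⟨0, Finset.mem_range.2 (by omega)⟩ fun k hk => ?_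
    have := Finset.mem_range.1 hk
    exact hcon (i - k) (by omega) (by omega)
  rw [← Finset.mul_sum, hsum] at this
  rw [Finset.sum_const, Finset.card_range, nsmul_eq_mul] at this
  exact lt_irrefl _ this

/-- One-dimensional dual function. -/
lemma exists_dual (q : ℕ) (hq : 1 ≤ q) : ∃ M : ℝ, 1 ≤ M ∧ ∀ (ks : KnotSeq) (i : ℤ),
    ∃ H : ℝ → ℝ, Measurable H ∧
      (∀ x, |H x| ≤ (Set.Ico (ks.T (i - q)) (ks.T i)).indicator (fun _ => M) x) ∧
      ∀ j, ∫ x in Set.Ico (0:ℝ) 1, Bspl ks.T q j x * H x =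
        if i = j then ks.T i - ks.T (i - q) else 0 := by
  obtain ⟨M, hM, P⟩ := exists_dual_poly q hq
  refine ⟨q * M + 1, by nlinarith [(Nat.cast_nonneg q : (0:ℝ) ≤ q)], ?_⟩
  intro ks i
  set T := ks.T with hTdef
  have hT : Monotone T := ks.T_monotone
  have hwn : 0 ≤ T i - T (i - q) := sub_nonneg.2 (hT (by omega))
  have hM1 : 0 ≤ q * M + 1 := by positivity
  rcases hwn.eq_or_lt with hw | hw
  · refine ⟨fun _ => 0, measurable_const, fun x => ?_, fun j => ?_⟩
    · rw [abs_zero]; exact Set.indicator_nonneg (fun _ _ => hM1) x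
    · simp [← hw]
  obtain ⟨l, hli, hil, hlong⟩ := exists_long T i q hq
  set w := T i - T (i - q) with hwdef
  set a := T (l - 1) with ha
  set h := T l - a with hh
  have hq0 : (0:ℝ) < q := by exact_mod_cast hq
  have hpos : 0 < h := by
    by_contra hcon
    push Not at hcon
    nlinarith
  have hwh : w / h ≤ q := by rw [div_le_iff₀ hpos]; exact hlong
  have hl1 : T (i - q) ≤ a := hT (by omega)
  have hl2 : T l ≤ T i := hT hli
  obtain ⟨g, hg1, hg2⟩ := P (fun k => (T k - a) / h)
    (fun k k' hk => div_le_div_of_nonneg_right (sub_le_sub_right (hT hk) a) hpos.le) l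
    (by simp [ha]) (div_self hpos.ne') i hli hil (by
      intro k hk hk'
      have b1 : T (i - q) ≤ T k := hT hk
      have b2 : T k ≤ T i := hT hk'
      rw [abs_div, abs_of_pos hpos, div_le_iff₀ hpos]
      refine le_trans ?_ hlong
      rw [abs_le]
      constructor <;> linarith)
  have hind : ∀ x ∈ Set.Ico a (T l), (x - a) / h ∈ Set.Icc (0:ℝ) 1 := by
    intro x hx
    refine ⟨div_nonneg (by linarith [hx.1]) hpos.le, ?_⟩
    rw [div_le_one hpos]
    linarith [hx.2]
  refine ⟨(Set.Ico a (T l)).indicator (fun x => w / h * g.eval ((x - a) / h)), ?_, ?_, ?_⟩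
  · refine Measurable.indicator ?_ measurableSet_Ico
    exact (by fun_prop : Continuous (fun x => w / h * g.eval ((x - a) / h))).measurable
  · intro x
    by_cases hx : x ∈ Set.Ico a (T l)
    · have hx' : x ∈ Set.Ico (T (i - q)) (T i) := ⟨hl1.trans hx.1, hx.2.trans_le hl2⟩
      rw [Set.indicator_of_mem hx, Set.indicator_of_mem hx', abs_mul,
        abs_of_nonneg (div_nonneg hwn hpos.le)]
      have := mul_le_mul hwh (hg1 _ (hind x hx)) (abs_nonneg _) hq0.le
      linarith
    · rw [Set.indicator_of_notMem hx, abs_zero]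
      exact Set.indicator_nonneg (fun _ _ => hM1) x
  · intro j
    have hsub : Set.Ico a (T l) ⊆ Set.Ico (0:ℝ) 1 :=
      Set.Ico_subset_Ico (ks.T_nonneg _) (ks.T_le_one _)
    have e1 : ∫ x in Set.Ico (0:ℝ) 1, Bspl T q j x *
        (Set.Ico a (T l)).indicator (fun x => w / h * g.eval ((x - a) / h)) x =
        ∫ x in Set.Ico a (T l), w / h * (g.eval (x / h - a / h) *
          (bp (fun k => (T k - a) / h) l q j).eval (x / h - a / h)) := by
      rw [← integral_indicator measurableSet_Ico, ← integral_indicator measurableSet_Ico]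
      congr 1
      ext x
      by_cases hx : x ∈ Set.Ico a (T l)
      · rw [Set.indicator_of_mem (hsub hx), Set.indicator_of_mem hx, Set.indicator_of_mem hx,
          Bspl_eq_bp T hT x l (hsub hx).2 hx.1 hx.2 a h hpos q hq j, sub_div]
        ring
      · rw [Set.indicator_of_notMem hx]
        by_cases hx' : x ∈ Set.Ico (0:ℝ) 1
        · rw [Set.indicator_of_mem hx', Set.indicator_of_notMem hx, mul_zero]
        · rw [Set.indicator_of_notMem hx']
    rw [e1, integral_const_mul, integral_Ico_eq_integral_Ioc,
      ← intervalIntegral.integral_of_le (by linarith : a ≤ T l),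
      intervalIntegral.integral_comp_div_sub (fun y => g.eval y *
          (bp (fun k => (T k - a) / h) l q j).eval y) hpos.ne' (a / h), sub_self,
      ← sub_div, ← hh, div_self hpos.ne', hg2 j]
    split_ifs
    · rw [smul_eq_mul, mul_one, div_mul_cancel₀ _ hpos.ne']
    · simp

lemma sum_indicator_le (T : ℤ → ℝ) (hT : Monotone T) (x : ℝ) (l : ℤ)
    (h1 : T (l - 1) ≤ x) (h2 : x < T l) (q n : ℕ) (M : ℝ) (hM : 0 ≤ M) :
    ∑ i : Fin n, (Set.Ico (T (((i : ℕ) : ℤ) + 1 - q)) (T (((i : ℕ) : ℤ) + 1))).indicator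
      (fun _ => M) x ≤ q * M := by
  classical
  simp only [Set.indicator_apply]
  rw [← Finset.sum_filter, Finset.sum_const, nsmul_eq_mul]
  refine mul_le_mul_of_nonneg_right ?_ hM
  have hc : (Finset.Icc l (l + q - 1)).card = q := by simp
  refine Nat.cast_le.2 ?_
  conv_rhs => rw [← hc]
  refine Finset.card_le_card_of_injOn (fun i : Fin n => ((i : ℕ) : ℤ) + 1) ?_ ?_
  · intro i hi
    simp only [Finset.coe_filter, Finset.mem_univ, true_and, Set.mem_ofPred_eq, Set.mem_Ico] at hi
    have a := hT.reflect_lt (h1.trans_lt hi.2)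
    have b := hT.reflect_lt (hi.1.trans_lt h2)
    simp only [Finset.coe_Icc, Set.mem_Icc]
    omega
  · intro i _ j _ hij
    simp only at hij
    ext
    omega

lemma integral_indicator_le (ks : KnotSeq) (i j : ℤ) (hij : i ≤ j) (M : ℝ) (hM : 0 ≤ M) :
    ∫ x in Set.Ico (0:ℝ) 1, (Set.Icc (ks.T i) (ks.T j)).indicator (fun _ => M) x ≤
      M * (ks.T j - ks.T i) := by
  have hm := ks.T_monotone hij
  have hi : Integrable ((Set.Icc (ks.T i) (ks.T j)).indicator (fun _ => M)) :=
    (integrable_indicator_iff measurableSet_Icc).2 (integrableOn_const (by simp))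
  refine (setIntegral_le_integral hi
    (Filter.Eventually.of_forall fun x => Set.indicator_nonneg (fun _ _ => hM) x)).trans ?_
  rw [integral_indicator measurableSet_Icc, setIntegral_const, smul_eq_mul, Real.volume_real_Icc_of_le hm,
    mul_comm]

lemma integral_expand {α : Type*} [MeasurableSpace α] {ν : Measure α} (f p : α → ℝ) (A : ℝ)
    (h1 : Integrable (fun x => f x * f x) ν) (h2 : Integrable (fun x => f x * p x) ν)
    (h3 : Integrable (fun x => p x * p x) ν) :
    ∫ x, (A * f x - p x) ^ 2 ∂ν = A ^ 2 * (∫ x, f x * f x ∂ν) - 2 * A * (∫ x, f x * p x ∂ν)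
      + ∫ x, p x * p x ∂ν := by
  have e : ∀ x, (A * f x - p x) ^ 2 = A ^ 2 * (f x * f x) - 2 * A * (f x * p x) + p x * p x := by
    intro x; ring
  simp only [e]
  have h12 : Integrable (fun x => A ^ 2 * (f x * f x) - 2 * A * (f x * p x)) ν :=
    (h1.const_mul _).sub (h2.const_mul _)
  rw [integral_add h12 h3, integral_sub (h1.const_mul _) (h2.const_mul _), integral_const_mul,
    integral_const_mul]

section tensor
variable {d : ℕ} {ι : Fin d → Type} [∀ k, Fintype (ι k)] {μ : Measure ℝ} [IsFiniteMeasure μ]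

lemma tensor_upper (b : ∀ k, ι k → ℝ → ℝ) (hm : ∀ k i, Measurable (b k i))
    (h0 : ∀ k i x, 0 ≤ b k i x) (Q : Fin d → ℝ) (hQ : ∀ k, ∀ᵐ x ∂μ, ∑ i, b k i x ≤ Q k)
    (w : ∀ k, ι k → ℝ) (hw : ∀ k i, ∫ x, b k i x ∂μ ≤ w k i) (hQ0 : ∀ k, 0 ≤ Q k)
    (θ : (∀ k, ι k) → ℝ) :
    ∫ x, (∑ j, θ j * ∏ k, b k (j k) (x k)) ^ 2 ∂(Measure.pi fun _ : Fin d => μ) ≤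
      (∏ k, Q k) * ∑ j, θ j ^ 2 * ∏ k, w k (j k) := by
  have hint : ∀ k i, Integrable (b k i) μ := by
    intro k i
    refine Integrable.of_bound (hm k i).aestronglyMeasurable (Q k) ?_
    filter_upwards [hQ k] with x hx
    rw [Real.norm_of_nonneg (h0 k i x)]
    exact (Finset.single_le_sum (f := fun i => b k i x) (fun i _ => h0 k i x)
      (Finset.mem_univ i)).trans hx
  have hprod : ∀ j : (∀ k, ι k), Integrable (fun x : Fin d → ℝ => ∏ k, b k (j k) (x k))
      (Measure.pi fun _ : Fin d => μ) := fun j =>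
    Integrable.fintype_prod_dep (f := fun k => b k (j k)) (fun k => hint k (j k))
  have hae : ∀ᵐ x ∂(Measure.pi fun _ : Fin d => μ), ∀ k, ∑ i, b k i (x k) ≤ Q k := by
    rw [ae_all_iff]
    intro k
    exact (Measure.quasiMeasurePreserving_eval (fun _ : Fin d => μ) k).ae (hQ k)
  calc _ ≤ ∫ x, (∏ k, Q k) * ∑ j, θ j ^ 2 * ∏ k, b k (j k) (x k)
        ∂(Measure.pi fun _ : Fin d => μ) := by
        refine integral_mono_of_nonneg (Filter.Eventually.of_forall fun x => sq_nonneg _) ?_ ?_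
        · exact (integrable_finsetSum _ fun j _ => (hprod j).const_mul _).const_mul _
        · filter_upwards [hae] with x hx
          have hp0 : ∀ j : (∀ k, ι k), 0 ≤ ∏ k, b k (j k) (x k) :=
            fun j => Finset.prod_nonneg fun k _ => h0 _ _ _
          have h1 : (∑ j, θ j * ∏ k, b k (j k) (x k)) ^ 2 ≤
              (∑ j : (∀ k, ι k), ∏ k, b k (j k) (x k)) * ∑ j, θ j ^ 2 * ∏ k, b k (j k) (x k) := by
            refine Finset.sum_sq_le_sum_mul_sum_of_sq_le_mul _ (fun j _ => hp0 j)
              (fun j _ => mul_nonneg (sq_nonneg _) (hp0 j)) (fun j _ => le_of_eq ?_)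
            ring
          have h2 : ∑ j : (∀ k, ι k), ∏ k, b k (j k) (x k) ≤ ∏ k, Q k := by
            classical
            have := (Finset.prod_univ_sum (fun k => (Finset.univ : Finset (ι k)))
              (fun k i => b k i (x k)))
            rw [Fintype.piFinset_univ] at this
            rw [← this]
            exact Finset.prod_le_prod (fun k _ => Finset.sum_nonneg fun i _ => h0 _ _ _)
              (fun k _ => hx k)
          exact h1.trans (mul_le_mul_of_nonneg_right h2
            (Finset.sum_nonneg fun j _ => mul_nonneg (sq_nonneg _) (hp0 j)))
    _ = (∏ k, Q k) * ∑ j, θ j ^ 2 * ∏ k, ∫ x, b k (j k) x ∂μ := by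
        rw [integral_const_mul, integral_finsetSum _ fun j _ => (hprod j).const_mul _]
        congr 1
        refine Finset.sum_congr rfl fun j _ => ?_
        rw [integral_const_mul, integral_fintype_prod_eq_prod (fun k => b k (j k))]
    _ ≤ _ := by
        refine mul_le_mul_of_nonneg_left ?_ (Finset.prod_nonneg fun k _ => hQ0 k)
        refine Finset.sum_le_sum fun j _ => mul_le_mul_of_nonneg_left ?_ (sq_nonneg _)
        exact Finset.prod_le_prod (fun k _ => integral_nonneg (h0 _ _)) (fun k _ => hw _ _)

lemma tensor_mul (u v : ∀ k, ι k → ℝ → ℝ) (hu : ∀ k i, MemLp (u k i) 2 μ)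
    (hv : ∀ k i, MemLp (v k i) 2 μ) (θ η : (∀ k, ι k) → ℝ) :
    Integrable (fun x => (∑ j, θ j * ∏ k, u k (j k) (x k)) * (∑ j, η j * ∏ k, v k (j k) (x k)))
      (Measure.pi fun _ : Fin d => μ) ∧
    ∫ x, (∑ j, θ j * ∏ k, u k (j k) (x k)) * (∑ j, η j * ∏ k, v k (j k) (x k))
      ∂(Measure.pi fun _ : Fin d => μ) =
      ∑ i, ∑ j, θ i * η j * ∏ k, ∫ x, u k (i k) x * v k (j k) x ∂μ := by
  have e : (fun x : Fin d → ℝ =>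
      (∑ j, θ j * ∏ k, u k (j k) (x k)) * (∑ j, η j * ∏ k, v k (j k) (x k))) =
      fun x => ∑ i, ∑ j, θ i * η j * ∏ k, (u k (i k) (x k) * v k (j k) (x k)) := by
    ext x
    rw [Finset.sum_mul_sum]
    refine Finset.sum_congr rfl fun i _ => Finset.sum_congr rfl fun j _ => ?_
    rw [Finset.prod_mul_distrib]
    ring
  have hprod : ∀ i j : (∀ k, ι k), Integrable
      (fun x : Fin d → ℝ => θ i * η j * ∏ k, (u k (i k) (x k) * v k (j k) (x k)))
      (Measure.pi fun _ : Fin d => μ) := fun i j =>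
    (Integrable.fintype_prod_dep (f := fun k y => u k (i k) y * v k (j k) y)
      (fun k => (hu k (i k)).integrable_mul (hv k (j k)))).const_mul _
  rw [e]
  refine ⟨integrable_finsetSum _ fun i _ => integrable_finsetSum _ fun j _ => hprod i j, ?_⟩
  rw [integral_finsetSum _ fun i _ => integrable_finsetSum _ fun j _ => hprod i j]
  refine Finset.sum_congr rfl fun i _ => ?_
  rw [integral_finsetSum _ fun j _ => hprod i j]
  refine Finset.sum_congr rfl fun j _ => ?_
  rw [integral_const_mul, integral_fintype_prod_eq_prod (fun k y => u k (i k) y * v k (j k) y)]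

lemma tensor_lower [∀ k, DecidableEq (ι k)] (B H b : ∀ k, ι k → ℝ → ℝ)
    (hB : ∀ k i, MemLp (B k i) 2 μ) (hH : ∀ k i, MemLp (H k i) 2 μ)
    (hm : ∀ k i, Measurable (b k i)) (hHb : ∀ k i x, |H k i x| ≤ b k i x)
    (Q : Fin d → ℝ) (hQ : ∀ k, ∀ᵐ x ∂μ, ∑ i, b k i x ≤ Q k) (hQ0 : ∀ k, 0 < Q k)
    (C : Fin d → ℝ) (hC0 : ∀ k, 0 < C k)
    (w : ∀ k, ι k → ℝ) (hw : ∀ k i, ∫ x, b k i x ∂μ ≤ C k * w k i)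
    (hdual : ∀ k i j, ∫ x, B k j x * H k i x ∂μ = if i = j then w k i else 0)
    (θ : (∀ k, ι k) → ℝ) :
    ∑ j, θ j ^ 2 * ∏ k, w k (j k) ≤ ((∏ k, Q k) * ∏ k, C k) *
    ∫ x, (∑ j, θ j * ∏ k, B k (j k) (x k)) ^ 2 ∂(Measure.pi fun _ : Fin d => μ) := by
  classical
  have h0 : ∀ k i x, 0 ≤ b k i x := fun k i x => (abs_nonneg _).trans (hHb k i x)
  set ν := Measure.pi fun _ : Fin d => μ with hν
  set S := ∑ j, θ j ^ 2 * ∏ k, w k (j k) with hS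
  set A := (∏ k, Q k) * ∏ k, C k with hA
  have hApos : 0 < A := mul_pos (Finset.prod_pos fun k _ => hQ0 k) (Finset.prod_pos fun k _ => hC0 k)
  have hbL : ∀ k i, MemLp (b k i) 2 μ := by
    intro k i
    refine MemLp.of_bound (hm k i).aestronglyMeasurable (Q k) ?_
    filter_upwards [hQ k] with x hx
    rw [Real.norm_of_nonneg (h0 k i x)]
    exact (Finset.single_le_sum (f := fun i => b k i x) (fun i _ => h0 k i x)
      (Finset.mem_univ i)).trans hx
  obtain ⟨iff, eff⟩ := tensor_mul B B hB hB θ θ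
  obtain ⟨ifp, efp⟩ := tensor_mul B H hB hH θ θ
  obtain ⟨ipp, epp⟩ := tensor_mul H H hH hH θ θ
  obtain ⟨ibb, ebb⟩ := tensor_mul b b hbL hbL (fun j => |θ j|) (fun j => |θ j|)
  have hfp : ∫ x, (∑ j, θ j * ∏ k, B k (j k) (x k)) * (∑ j, θ j * ∏ k, H k (j k) (x k)) ∂ν = S := by
    rw [efp, hS]
    refine Finset.sum_congr rfl fun i _ => ?_
    rw [Finset.sum_eq_single i]
    · simp only [hdual, if_true]
      ring
    · intro j _ hji
      obtain ⟨k, hk⟩ := Function.ne_iff.1 hji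
      rw [Finset.prod_eq_zero (Finset.mem_univ k), mul_zero]
      rw [hdual, if_neg hk]
    · simp
  have hpp : ∫ x, (∑ j, θ j * ∏ k, H k (j k) (x k)) * (∑ j, θ j * ∏ k, H k (j k) (x k)) ∂ν ≤ A * S := by
    have h1 := tensor_upper b hm h0 Q hQ (fun k i => C k * w k i) hw (fun k => (hQ0 k).le)
      (fun j => |θ j|)
    have h2 : (∏ k, Q k) * ∑ j : (∀ k, ι k), |θ j| ^ 2 * ∏ k, (C k * w k (j k)) = A * S := by
      rw [hA, hS, mul_assoc]
      congr 1
      rw [Finset.mul_sum]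
      refine Finset.sum_congr rfl fun j _ => ?_
      rw [Finset.prod_mul_distrib, sq_abs]
      ring
    rw [h2] at h1
    refine le_trans ?_ h1
    simp only [pow_two]
    refine integral_mono ipp ibb fun x => ?_
    rw [← pow_two, ← pow_two, sq_le_sq]
    refine le_trans ?_ (le_abs_self _)
    refine (Finset.abs_sum_le_sum_abs _ _).trans (Finset.sum_le_sum fun j _ => ?_)
    rw [abs_mul, Finset.abs_prod]
    exact mul_le_mul_of_nonneg_left (Finset.prod_le_prod (fun k _ => abs_nonneg _)
      (fun k _ => hHb _ _ _)) (abs_nonneg _)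
  have hsq : 0 ≤ ∫ x, (A * (∑ j, θ j * ∏ k, B k (j k) (x k)) -
      (∑ j, θ j * ∏ k, H k (j k) (x k))) ^ 2 ∂ν := integral_nonneg fun x => sq_nonneg _
  have hexp : ∫ x, (A * (∑ j, θ j * ∏ k, B k (j k) (x k)) -
      (∑ j, θ j * ∏ k, H k (j k) (x k))) ^ 2 ∂ν =
      A ^ 2 * (∫ x, (∑ j, θ j * ∏ k, B k (j k) (x k)) * (∑ j, θ j * ∏ k, B k (j k) (x k)) ∂ν)
      - 2 * A * S +
      ∫ x, (∑ j, θ j * ∏ k, H k (j k) (x k)) * (∑ j, θ j * ∏ k, H k (j k) (x k)) ∂ν := by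
    rw [← hfp]
    exact integral_expand _ _ A iff ifp ipp
  simp only [← pow_two] at hexp hpp
  rw [hexp] at hsq
  have : 0 ≤ A * (A * (∫ x, (∑ j, θ j * ∏ k, B k (j k) (x k)) ^ 2 ∂ν) - S) := by nlinarith
  have := nonneg_of_mul_nonneg_right this hApos
  linarith

end tensor

/-- There is a constant `c ∈ (0,1]` depending only on `q` and `d` such
that every tensor-product spline `f = Σ_j θ_j Π_k B_{j_k,q_k}` satisfies
`c Σ_j θ_j² Π_k (t_{k,j_k} − t_{k,j_k−q_k}) ≤ ∫_{[0,1]^d} f² ≤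
Σ_j θ_j² Π_k (t_{k,j_k} − t_{k,j_k−q_k})`. -/
theorem statement15 (d : ℕ) (hd : 1 ≤ d) (q : Fin d → ℕ) (hq : ∀ k, 1 ≤ q k) :
    ∃ c : ℝ, 0 < c ∧ c ≤ 1 ∧
      ∀ (ks : Fin d → KnotSeq) (θ : ((k : Fin d) → Fin ((ks k).N + q k)) → ℝ),
        c * ∑ j, θ j ^ 2 * ∏ k, ((ks k).T (((j k : ℕ) : ℤ) + 1) -
              (ks k).T (((j k : ℕ) : ℤ) + 1 - q k)) ≤
          (∫ x in Set.univ.pi fun _ : Fin d => Set.Icc (0 : ℝ) 1,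
            (∑ j, θ j * ∏ k, Bspl (ks k).T (q k) (((j k : ℕ) : ℤ) + 1) (x k)) ^ 2) ∧
        (∫ x in Set.univ.pi fun _ : Fin d => Set.Icc (0 : ℝ) 1,
            (∑ j, θ j * ∏ k, Bspl (ks k).T (q k) (((j k : ℕ) : ℤ) + 1) (x k)) ^ 2) ≤
          ∑ j, θ j ^ 2 * ∏ k, ((ks k).T (((j k : ℕ) : ℤ) + 1) -
              (ks k).T (((j k : ℕ) : ℤ) + 1 - q k)) := by
  choose M hM1 hdual using fun k => exists_dual (q k) (hq k)
  have hM0 : ∀ k, 0 < M k := fun k => zero_lt_one.trans_le (hM1 k)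
  have hq1 : ∀ k, (1 : ℝ) ≤ q k := fun k => by exact_mod_cast hq k
  have hQ1 : ∀ k, 1 ≤ q k * M k := fun k => one_le_mul_of_one_le_of_one_le (hq1 k) (hM1 k)
  set A : ℝ := (∏ k, (q k * M k)) * ∏ k, M k with hA
  have hprod1 : ∀ g : Fin d → ℝ, (∀ k, 1 ≤ g k) → 1 ≤ ∏ k, g k := by
    intro g hg
    have := Finset.prod_le_prod (s := (Finset.univ : Finset (Fin d))) (f := fun _ => (1:ℝ))
      (g := g) (fun k _ => zero_le_one) (fun k _ => hg k)
    simpa using this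
  have hA1 : 1 ≤ A := one_le_mul_of_one_le_of_one_le (hprod1 _ hQ1) (hprod1 _ hM1)
  refine ⟨1 / A, by positivity, by rw [div_le_one (by linarith)]; exact hA1, ?_⟩
  intro ks θ
  set μ : Measure ℝ := volume.restrict (Set.Ico (0:ℝ) 1) with hμ
  have hset : (volume : Measure (Fin d → ℝ)).restrict
      (Set.univ.pi fun _ : Fin d => Set.Icc (0 : ℝ) 1) = Measure.pi fun _ : Fin d => μ := by
    rw [hμ, ← Measure.restrict_pi_pi]
    exact (Measure.restrict_congr_set Measure.pi_Ico_ae_eq_pi_Icc).symm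
  rw [hset]
  have hmem : ∀ᵐ x ∂μ, x ∈ Set.Ico (0:ℝ) 1 := ae_restrict_mem measurableSet_Ico
  have hBm : ∀ k (i : Fin ((ks k).N + q k)), Measurable (Bspl (ks k).T (q k) (((i : ℕ) : ℤ) + 1)) :=
    fun k i => Bspl_measurable _ _ (hq k) _
  have hB0 : ∀ k (i : Fin ((ks k).N + q k)) x, 0 ≤ Bspl (ks k).T (q k) (((i : ℕ) : ℤ) + 1) x :=
    fun k i x => (Bspl_nonneg_supp _ (ks k).T_monotone _ (hq k) _ x).1
  have hBsum : ∀ k, ∀ᵐ x ∂μ, ∑ i : Fin ((ks k).N + q k),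
      Bspl (ks k).T (q k) (((i : ℕ) : ℤ) + 1) x ≤ 1 := by
    intro k
    filter_upwards [hmem] with x hx
    obtain ⟨l, h1, h2⟩ := (ks k).exists_interval x hx
    have := Bspl_sum_le _ (ks k).T_monotone x l hx.2 h1 h2 (q k) (hq k) ((ks k).N + q k) 1
    rw [Finset.sum_range] at this
    simpa only [add_comm (1 : ℤ)] using this
  have hB1 : ∀ k (i : Fin ((ks k).N + q k)), ∀ᵐ x ∂μ,
      ‖Bspl (ks k).T (q k) (((i : ℕ) : ℤ) + 1) x‖ ≤ 1 := by
    intro k i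
    filter_upwards [hBsum k] with x hx
    rw [Real.norm_of_nonneg (hB0 k i x)]
    exact (Finset.single_le_sum (f := fun i : Fin ((ks k).N + q k) =>
      Bspl (ks k).T (q k) (((i : ℕ) : ℤ) + 1) x) (fun i _ => hB0 k i x)
      (Finset.mem_univ i)).trans hx
  have hle : ∀ k (i : Fin ((ks k).N + q k)), ((i : ℕ) : ℤ) + 1 - q k ≤ ((i : ℕ) : ℤ) + 1 :=
    fun k i => by omega
  constructor
  · rw [one_div_mul_eq_div, div_le_iff₀ (by linarith), mul_comm _ A]
    choose H hHm hHb hHd using fun k (i : Fin ((ks k).N + q k)) =>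
      hdual k (ks k) (((i : ℕ) : ℤ) + 1)
    refine tensor_lower (μ := μ) (ι := fun k => Fin ((ks k).N + q k)) (fun k i => Bspl (ks k).T (q k) (((i : ℕ) : ℤ) + 1)) H
      (fun k i => (Set.Ico ((ks k).T (((i : ℕ) : ℤ) + 1 - q k))
        ((ks k).T (((i : ℕ) : ℤ) + 1))).indicator (fun _ => M k)) ?_ ?_ ?_ hHb
      (fun k => q k * M k) ?_ (fun k => by linarith [hQ1 k]) M hM0
      (fun k i => (ks k).T (((i : ℕ) : ℤ) + 1) - (ks k).T (((i : ℕ) : ℤ) + 1 - q k)) ?_ ?_ θ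
    · intro k i
      exact MemLp.of_bound (hBm k i).aestronglyMeasurable 1 (hB1 k i)
    · intro k i
      refine MemLp.of_bound (hHm k i).aestronglyMeasurable (M k) (Filter.Eventually.of_forall ?_)
      intro x
      exact (hHb k i x).trans (Set.indicator_le_self' (fun _ _ => (hM0 k).le) x)
    · intro k i
      exact measurable_const.indicator measurableSet_Ico
    · intro k
      filter_upwards [hmem] with x hx
      obtain ⟨l, h1, h2⟩ := (ks k).exists_interval x hx
      exact sum_indicator_le _ (ks k).T_monotone x l h1 h2 (q k) _ (M k) (hM0 k).le
    · intro k i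
      refine le_trans ?_ (integral_indicator_le (ks k) _ _ (hle k i) (M k) (hM0 k).le)
      refine integral_mono_of_nonneg (Filter.Eventually.of_forall fun x =>
        Set.indicator_nonneg (fun _ _ => (hM0 k).le) x) ?_ (Filter.Eventually.of_forall fun x => ?_)
      · exact (integrable_const _).indicator measurableSet_Icc
      · exact Set.indicator_le_indicator_of_subset Set.Ico_subset_Icc_self
          (fun _ => (hM0 k).le) x
    · intro k i j
      have := hHd k i (((j : ℕ) : ℤ) + 1)
      rw [this]
      by_cases h : i = j
      · simp [h]
      · have h' : ¬ (((i : ℕ) : ℤ) + 1 = ((j : ℕ) : ℤ) + 1) := by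
          intro h'
          exact h (Fin.ext (by omega))
        rw [if_neg h, if_neg h']
  · have := tensor_upper (μ := μ) (fun k (i : Fin ((ks k).N + q k)) =>
      Bspl (ks k).T (q k) (((i : ℕ) : ℤ) + 1)) hBm hB0 (fun _ => 1) hBsum
      (fun k i => (ks k).T (((i : ℕ) : ℤ) + 1) - (ks k).T (((i : ℕ) : ℤ) + 1 - q k)) ?_
      (fun _ => zero_le_one) θ
    · simpa only [Finset.prod_const_one, one_mul] using this
    · intro k i
      refine le_trans ?_ ((integral_indicator_le (ks k) _ _ (hle k i) 1 zero_le_one).trans_eq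
        (one_mul _))
      refine integral_mono_of_nonneg (Filter.Eventually.of_forall fun x => hB0 k i x) ?_ ?_
      · exact (integrable_const _).indicator measurableSet_Icc
      · filter_upwards [hB1 k i] with x hx
        rw [Real.norm_of_nonneg (hB0 k i x)] at hx
        by_cases h0 : Bspl (ks k).T (q k) (((i : ℕ) : ℤ) + 1) x = 0
        · rw [h0]; exact Set.indicator_nonneg (fun _ _ => zero_le_one) x
        · have := (Bspl_nonneg_supp _ (ks k).T_monotone _ (hq k) _ x).2 h0
          rw [Set.indicator_of_mem (show x ∈ Set.Icc _ _ from this)]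
          exact hx
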